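/- arXiv:2008.10577 — 4 statements merged into one kernel-verified Lean document; each statement's English description precedes it below -/
import Mathlib

section
/- Let X be a multiset of elements of ZMod m and let x ∈ X have multiplicity at least 3 in X. Let Y be the multiset resulting from removing two copies of x from X and adding one copy of 2x (computed in ZMod m). Then Y* = X* and the cardinality of Y equals the cardinality of X minus 1. -/
/-- The set of attainable subset sums of a multiset `X` over `ZMod m`:
all values `Y.sum` for sub-multisets `Y ≤ X`. -/
def subsetSums {m : ℕ} (X : Multiset (ZMod m)) : Set (ZMod m) :=
  {s | ∃ Y ≤ X, Y.sum = s}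

/-!
Adjoining an element `a` to `X` replaces `X*` by the sumset `{0, a} + X*`. The three copies of `x`
in `X` therefore contribute `{0, x} + {0, x} + {0, x} = {0, x, 2x, 3x}`, which is also the
contribution `{0, 2x} + {0, x}` of `2x` together with the remaining copy of `x`.
-/

open Multiset
open scoped Pointwise

section AttainableSums

variable {M : Type*} [AddCommMonoid M]

/-- The set `X*` of attainable subset sums of a multiset `X` in an arbitrary additive commutative
monoid; over `ZMod m` it is definitionally `subsetSums X`. -/
def attainableSums (X : Multiset M) : Set M :=
  {s | ∃ Y ≤ X, Y.sum = s}

theorem pair_zero_add (a : M) (S : Set M) : {0, a} + S = S ∪ (a + ·) '' S := by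
  rw [Set.insert_eq, Set.union_add, Set.singleton_zero, zero_add, Set.singleton_add]

theorem attainableSums_cons (a : M) (X : Multiset M) :
    attainableSums (a ::ₘ X) = {0, a} + attainableSums X := by
  ext s
  simp only [pair_zero_add, attainableSums, ← mem_powerset, powerset_cons, mem_add, mem_map,
    or_and_right, exists_or, exists_exists_and_eq_and, sum_cons, Set.mem_union, Set.mem_image,
    Set.mem_ofPred_eq]

theorem pair_zero_two_nsmul_add_pair_zero (x : M) :
    ({0, 2 • x} + {0, x} : Set M) = {0, x} + ({0, x} + {0, x}) := by
  calc ({0, 2 • x} + {0, x} : Set M)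
      = {0, x, 2 • x, 3 • x} := by
        simp only [pair_zero_add, Set.image_pair, succ_nsmul, zero_nsmul, zero_add, add_zero]
        grind
    _ = {0, x} + ({0, x} + {0, x}) := by
        simp only [pair_zero_add, Set.image_pair, Set.image_union, succ_nsmul, zero_nsmul, zero_add,
          add_zero, add_assoc]
        grind

theorem attainableSums_two_nsmul_cons_cons (x : M) (Z : Multiset M) :
    attainableSums ((2 • x) ::ₘ x ::ₘ Z) = attainableSums (x ::ₘ x ::ₘ x ::ₘ Z) := by
  simp only [attainableSums_cons, ← add_assoc, pair_zero_two_nsmul_add_pair_zero]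

theorem preprocessing_onestep_general [DecidableEq M] (X : Multiset M) (x : M)
    (hx : 3 ≤ X.count x) :
    attainableSums ((2 • x) ::ₘ ((X.erase x).erase x)) = attainableSums X ∧
    ((2 • x) ::ₘ ((X.erase x).erase x)).card = X.card - 1 := by
  obtain ⟨Z, rfl⟩ : ∃ Z, X = x ::ₘ x ::ₘ x ::ₘ Z := by
    obtain ⟨Z, rfl⟩ := exists_add_of_le (le_count_iff_replicate_le.mp hx)
    exact ⟨Z, by simp only [replicate_succ, replicate_zero, cons_add, zero_add]⟩
  simp only [erase_cons_head]
  exact ⟨attainableSums_two_nsmul_cons_cons x Z, by simp only [card_cons, Nat.add_sub_cancel]⟩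

end AttainableSums

/-- If `x` has multiplicity at least 3 in `X`, then removing two copies of `x`
and adding one copy of `2x` preserves the set of attainable subset sums and
decreases the cardinality by exactly one. -/
theorem preprocessing_onestep (m : ℕ) (hm : 1 ≤ m) (X : Multiset (ZMod m))
    (x : ZMod m) (hx : 3 ≤ X.count x) :
    subsetSums ((2 * x) ::ₘ ((X.erase x).erase x)) = subsetSums X ∧
    ((2 * x) ::ₘ ((X.erase x).erase x)).card = X.card - 1 := by
  rw [two_mul, ← two_nsmul]
  exact preprocessing_onestep_general X x hx
end

section
/- For every multiset X of n elements of ZMod m there exists a multiset Y of elements of ZMod m such that Y* = X*, every element of ZMod m has multiplicity at most 2 in Y, and the cardinality of Y is at most min(n, 2·|X*|). (Correctness of the preprocessing that ensures n = O(|X*|).) -/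
/-!
Replacing three copies `a, a, a` of an element by `a, 2a` keeps its contributions `0, a, 2a, 3a`
to the sums and loses one element. So a multiset of least cardinality among those with the sums
of `X` has all multiplicities at most two; as each of its elements is itself an attainable sum,
it has at most twice as many elements as there are sums.
-/

open scoped Pointwise

section Multiplicity

variable {α : Type*} [DecidableEq α] {X : Multiset α} {k : ℕ}

theorem exists_eq_replicate_add_of_le_count {a : α} (h : k ≤ X.count a) :
    ∃ Z, X = Multiset.replicate k a + Z :=
  Multiset.le_iff_exists_add.mp (Multiset.le_count_iff_replicate_le.mp h)

theorem card_le_card_toFinset_mul_of_count_le (h : ∀ a, X.count a ≤ k) :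
    X.card ≤ X.toFinset.card * k := by
  rw [← X.toFinset_sum_count_eq]
  exact Finset.sum_le_card_nsmul _ _ k fun a _ ↦ h a

end Multiplicity

section Sums

variable {M : Type*} [AddCommMonoid M] {X : Multiset M} {k : ℕ}

/-- The set `X*` of subset sums of a multiset `X` in an arbitrary additive commutative monoid;
for `M = ZMod m` it unfolds to `subsetSums`. -/
def submultisetSums (X : Multiset M) : Set M :=
  Multiset.sum '' Set.Iic X

theorem finite_submultisetSums (X : Multiset M) : (submultisetSums X).Finite := by
  classical exact (Set.finite_Iic X).image _

theorem mem_submultisetSums_of_mem {a : M} (h : a ∈ X) : a ∈ submultisetSums X :=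
  ⟨{a}, Multiset.singleton_le.mpr h, Multiset.sum_singleton a⟩

theorem submultisetSums_add (X Y : Multiset M) :
    submultisetSums (X + Y) = submultisetSums X + submultisetSums Y := by
  classical
  apply Set.Subset.antisymm
  · rintro _ ⟨Z, hZ, rfl⟩
    refine ⟨(Z ∩ X).sum, ⟨_, Multiset.inter_le_right, rfl⟩,
      (Z - X).sum, ⟨_, Multiset.sub_le_iff_le_add'.mpr hZ, rfl⟩, ?_⟩
    change (Z ∩ X).sum + (Z - X).sum = Z.sum
    rw [← Multiset.sum_add, add_comm, Multiset.sub_add_inter]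
  · rintro _ ⟨_, ⟨V, hV, rfl⟩, _, ⟨W, hW, rfl⟩, rfl⟩
    exact ⟨V + W, Set.mem_Iic.mpr (add_le_add hV hW), Multiset.sum_add V W⟩

theorem submultisetSums_replicate (n : ℕ) (a : M) :
    submultisetSums (Multiset.replicate n a) = (· • a) '' Set.Iic n := by
  ext s
  simp [submultisetSums, Multiset.le_replicate_iff]

theorem submultisetSums_replicate_two_mul_add_one (n : ℕ) (a : M) :
    submultisetSums (Multiset.replicate (2 * n + 1) a) =
      submultisetSums (Multiset.replicate 1 a + Multiset.replicate n (2 • a)) := by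
  simp only [submultisetSums_add, submultisetSums_replicate]
  apply Set.Subset.antisymm
  · rintro _ ⟨i, hi : i ≤ 2 * n + 1, rfl⟩
    have mod_le : i % 2 ≤ 1 := by lia
    have div_le : i / 2 ≤ n := by lia
    refine ⟨_, ⟨i % 2, mod_le, rfl⟩, _, ⟨i / 2, div_le, rfl⟩, ?_⟩
    simp only [← mul_nsmul, ← add_nsmul, Nat.mod_add_div]
  · rintro _ ⟨_, ⟨i, hi : i ≤ 1, rfl⟩, _, ⟨j, hj : j ≤ n, rfl⟩, rfl⟩
    have add_le : i + 2 * j ≤ 2 * n + 1 := by lia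
    refine ⟨i + 2 * j, add_le, ?_⟩
    simp only [add_nsmul, mul_nsmul]

theorem exists_card_lt_of_two_lt_count [DecidableEq M] {a : M} (h : 2 < X.count a) :
    ∃ Y, submultisetSums Y = submultisetSums X ∧ Y.card < X.card := by
  obtain ⟨Z, rfl⟩ := exists_eq_replicate_add_of_le_count h
  refine ⟨Multiset.replicate 1 a + Multiset.replicate 1 (2 • a) + Z, ?_, by simp⟩
  rw [submultisetSums_add, ← submultisetSums_replicate_two_mul_add_one, ← submultisetSums_add]

theorem card_le_mul_ncard_submultisetSums [DecidableEq M] (h : ∀ a, X.count a ≤ k) :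
    X.card ≤ k * (submultisetSums X).ncard := by
  have support_subset : (X.toFinset : Set M) ⊆ submultisetSums X := fun a ha ↦
    mem_submultisetSums_of_mem (Multiset.mem_toFinset.mp ha)
  calc
    X.card ≤ X.toFinset.card * k := card_le_card_toFinset_mul_of_count_le h
    _ = k * (X.toFinset : Set M).ncard := by rw [mul_comm, Set.ncard_coe_finset]
    _ ≤ k * (submultisetSums X).ncard :=
      Nat.mul_le_mul_left k (Set.ncard_le_ncard support_subset (finite_submultisetSums X))

theorem preprocessing_general [DecidableEq M] (X : Multiset M) :
    ∃ Y : Multiset M,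
      submultisetSums Y = submultisetSums X ∧
      (∀ a : M, Y.count a ≤ 2) ∧
      Y.card ≤ min X.card (2 * (submultisetSums X).ncard) := by
  obtain ⟨Y, hY⟩ := exists_minimalFor_of_wellFoundedLT
    (fun Y ↦ submultisetSums Y = submultisetSums X) Multiset.card ⟨X, rfl⟩
  have count_le_two (a : M) : Y.count a ≤ 2 := by
    by_contra! h
    obtain ⟨W, hWY, hlt⟩ := exists_card_lt_of_two_lt_count h
    exact hY.not_lt (hWY.trans hY.prop) hlt
  refine ⟨Y, hY.prop, count_le_two, le_min (hY.le rfl) ?_⟩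
  rw [← hY.prop]
  exact card_le_mul_ncard_submultisetSums count_le_two

end Sums

/-- Correctness of the preprocessing: every multiset `X` of `n` elements of `ZMod m`
can be replaced by a multiset `Y` with the same attainable subset sums, in which
every element has multiplicity at most 2, and whose cardinality is at most
`min n (2·|X*|)`. -/
theorem preprocessing (m : ℕ) (hm : 1 ≤ m) (X : Multiset (ZMod m)) :
    ∃ Y : Multiset (ZMod m),
      subsetSums Y = subsetSums X ∧
      (∀ a : ZMod m, Y.count a ≤ 2) ∧
      Y.card ≤ min X.card (2 * (subsetSums X).ncard) :=
  preprocessing_general X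
end

section
/- Let m ≥ 1, let S ⊆ {0, …, m−1}, let x ∈ {0, …, m−1}, and define the doubled indicator χ : {0, …, 2m−1} → {0, 1} by χ(i) = 1 iff (i mod m) ∈ S. Identify S with a subset of ZMod m. Then for every d ∈ {0, …, m−1}: χ(d) ≠ χ(d + m − x) if and only if d (viewed in ZMod m) belongs to the symmetric difference (S + x) △ S. Consequently, if (S + x) △ S is nonempty, the least d ∈ {0, …, m−1} with χ(d) ≠ χ(d + m − x) is exactly the least representative in {0, …, m−1} of an element of (S + x) △ S. (Correctness of extracting the symmetric difference via longest-common-prefix queries in Algorithm II.) -/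
/-!
A residue `d` lies in `S + x` iff `d - x` lies in `S`, and `d + m - x` is a natural number
representing `d - x`. So `χ d` decides `d ∈ S`, while `χ (d + m - x)` decides `d ∈ S + x`.
-/

section ResiduesOfBoundedSet

variable {m x d : ℕ} {S : Set ℕ}

theorem natCast_mem_image_natCast_iff (hS : S ⊆ Set.Iio m) (n : ℕ) :
    (n : ZMod m) ∈ ((↑) : ℕ → ZMod m) '' S ↔ n % m ∈ S := by
  constructor
  · rintro ⟨i, hi, hin⟩
    have i_eq_mod : i = n % m := by
      rw [← Nat.mod_eq_of_lt (hS hi)]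
      exact (ZMod.natCast_eq_natCast_iff' i n m).mp hin
    exact i_eq_mod ▸ hi
  · intro hn
    exact ⟨n % m, hn, ZMod.natCast_mod n m⟩

theorem natCast_add_modulus_sub (hx : x ≤ d + m) :
    ((d + m - x : ℕ) : ZMod m) = d - x := by
  simp [Nat.cast_sub hx]

theorem natCast_mem_translate_iff (hS : S ⊆ Set.Iio m) (hx : x ≤ d + m) :
    (d : ZMod m) ∈ (· + (x : ZMod m)) '' (((↑) : ℕ → ZMod m) '' S) ↔
      (d + m - x) % m ∈ S := by
  rw [Set.image_add_right, Set.mem_preimage, ← sub_eq_add_neg,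
    ← natCast_add_modulus_sub hx, natCast_mem_image_natCast_iff hS]

theorem natCast_mem_symmDiff_translate_iff (hS : S ⊆ Set.Iio m) (hx : x ≤ d + m) :
    (d : ZMod m) ∈
        symmDiff ((· + (x : ZMod m)) '' (((↑) : ℕ → ZMod m) '' S)) (((↑) : ℕ → ZMod m) '' S) ↔
      ¬(d % m ∈ S ↔ (d + m - x) % m ∈ S) := by
  rw [Set.mem_symmDiff, natCast_mem_translate_iff hS hx, natCast_mem_image_natCast_iff hS]
  tauto

end ResiduesOfBoundedSet

/-- Correctness of extracting the symmetric difference via longest-common-prefix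
queries in Algorithm II: with `χ` the doubled indicator string of
`S ⊆ {0, …, m-1}` (i.e. `χ i = 1` iff `i % m ∈ S`) and `x < m`, a position
`d < m` satisfies `χ d ≠ χ (d + m - x)` iff `d` (viewed in `ZMod m`) lies in the
symmetric difference `(S + x) △ S`; consequently, if this symmetric difference
is nonempty, the least such `d` is the least representative in `{0, …, m-1}` of
an element of `(S + x) △ S`. -/
theorem lcp_extracts_symmDiff (m : ℕ) (hm : 1 ≤ m) (S : Finset ℕ)
    (hS : ∀ i ∈ S, i < m) (x : ℕ) (hx : x < m) :
    (∀ d, d < m →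
      (¬(d % m ∈ S ↔ (d + m - x) % m ∈ S) ↔
        (d : ZMod m) ∈
          symmDiff ((· + (x : ZMod m)) '' (((↑) : ℕ → ZMod m) '' (S : Set ℕ)))
            ((((↑) : ℕ → ZMod m)) '' (S : Set ℕ)))) ∧
    ((symmDiff ((· + (x : ZMod m)) '' (((↑) : ℕ → ZMod m) '' (S : Set ℕ)))
        ((((↑) : ℕ → ZMod m)) '' (S : Set ℕ))).Nonempty →
      sInf {d : ℕ | d < m ∧ ¬(d % m ∈ S ↔ (d + m - x) % m ∈ S)} =
      sInf {d : ℕ | d < m ∧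
        (d : ZMod m) ∈
          symmDiff ((· + (x : ZMod m)) '' (((↑) : ℕ → ZMod m) '' (S : Set ℕ)))
            ((((↑) : ℕ → ZMod m)) '' (S : Set ℕ))}) := by
  have mismatch_iff (d : ℕ) :=
    (natCast_mem_symmDiff_translate_iff (S := S) hS (hx.le.trans (Nat.le_add_left m d))).symm
  exact ⟨fun d _ => mismatch_iff d,
    fun _ => congrArg sInf (Set.ext fun d => and_congr_right fun _ => mismatch_iff d)⟩
end

section
/- Let G be a finite undirected simple graph with edge-weight function w assigning pairwise distinct real weights to its edges, and let e_1, e_2, …, e_M be all edges of G listed in increasing order of weight. Call a walk in G strictly increasing if the sequence of weights of its consecutive edges is strictly increasing (walks of length 0 are strictly increasing). For k ≥ 0 write reach_k(u, v) if there is a strictly increasing walk from u to v using only edges from {e_1, …, e_k}. If 1 ≤ k ≤ M and e_k has endpoints a and b, then for all vertices u, v: reach_k(u, v) holds if and only if reach_{k−1}(u, v) holds, or (v = b and reach_{k−1}(u, a)), or (v = a and reach_{k−1}(u, b)). (Correctness of the edge-scanning recurrence of the All-Pairs Non-Decreasing Paths algorithm in the distinct-weights case.) -/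
/-- A walk in a weighted graph is strictly increasing if the weights of its
edges, in the order traversed, form a strictly increasing sequence. -/
def StrictlyIncreasingWalk {V : Type*} (G : SimpleGraph V) (w : Sym2 V → ℝ)
    {u v : V} (W : G.Walk u v) : Prop :=
  List.Chain' (· < ·) (W.edges.map w)

/-- `reachUpTo G w e k u v`: there is a strictly increasing walk from `u` to `v`
using only edges among the `k` lightest edges `e 0, …, e (k-1)` of `G`. -/
def reachUpTo {V : Type*} {M : ℕ} (G : SimpleGraph V) (w : Sym2 V → ℝ)
    (e : Fin M → Sym2 V) (k : ℕ) (u v : V) : Prop :=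
  ∃ W : G.Walk u v, StrictlyIncreasingWalk G w W ∧
    ∀ f ∈ W.edges, ∃ j : Fin M, (j : ℕ) < k ∧ e j = f

/-!
In a strictly increasing walk every edge before the last one is lighter than the last one. Hence
a nontrivial walk using the first `k` edges is a walk using the first `j < k` edges followed by
the edge `e j`; conversely `e j` can always be appended to such a walk. Scanning one more edge
therefore only adds the walks that end with it.
-/

section EdgeScan

variable {V : Type*} {M : ℕ} {G : SimpleGraph V} {w : Sym2 V → ℝ} {e : Fin M → Sym2 V}
  {k : ℕ} {u v x a b : V}

theorem strictlyIncreasingWalk_iff_pairwise {W : G.Walk u v} :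
    StrictlyIncreasingWalk G w W ↔ W.edges.Pairwise fun f g => w f < w g :=
  List.isChain_iff_pairwise.trans List.pairwise_map

theorem strictlyIncreasingWalk_concat_iff {W : G.Walk u x} (h : G.Adj x v) :
    StrictlyIncreasingWalk G w (W.concat h) ↔
      StrictlyIncreasingWalk G w W ∧ ∀ f ∈ W.edges, w f < w s(x, v) := by
  simp only [strictlyIncreasingWalk_iff_pairwise, SimpleGraph.Walk.edges_concat,
    List.concat_eq_append, List.pairwise_append, List.pairwise_singleton, List.mem_singleton,
    forall_eq, true_and]

theorem reachUpTo.refl (k : ℕ) (u : V) : reachUpTo G w e k u u :=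
  ⟨.nil, List.IsChain.nil, by simp⟩

theorem reachUpTo.concat (hmono : StrictMono fun j => w (e j)) {j : Fin M}
    (hr : reachUpTo G w e j u x) (h : G.Adj x v) (hj : e j = s(x, v)) (hjk : j < k) :
    reachUpTo G w e k u v := by
  obtain ⟨W, hinc, hedges⟩ := hr
  refine ⟨W.concat h, (strictlyIncreasingWalk_concat_iff h).2 ⟨hinc, fun f hf => ?_⟩,
    fun f hf => ?_⟩
  · obtain ⟨i, hij, rfl⟩ := hedges f hf
    exact hj ▸ hmono hij
  · rw [SimpleGraph.Walk.edges_concat, List.concat_eq_append, List.mem_append,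
      List.mem_singleton] at hf
    rcases hf with hf | rfl
    · obtain ⟨i, hij, hif⟩ := hedges f hf
      exact ⟨i, hij.trans hjk, hif⟩
    · exact ⟨j, hjk, hj⟩

theorem reachUpTo.eq_or_exists_last_edge (hmono : StrictMono fun j => w (e j))
    (hr : reachUpTo G w e k u v) :
    u = v ∨ ∃ j : Fin M, j < k ∧
      ∃ x, G.Adj x v ∧ e j = s(x, v) ∧ reachUpTo G w e j u x := by
  obtain ⟨W, hinc, hedges⟩ := hr
  cases W using SimpleGraph.Walk.concatRec with
  | Hnil => exact .inl rfl
  | Hconcat p h =>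
    obtain ⟨hp, hlast⟩ := (strictlyIncreasingWalk_concat_iff h).1 hinc
    simp only [SimpleGraph.Walk.edges_concat, List.concat_eq_append, List.mem_append,
      List.mem_singleton] at hedges
    obtain ⟨j, hjk, hj⟩ := hedges _ (.inr rfl)
    refine .inr ⟨j, hjk, _, h, hj, p, hp, fun f hf => ?_⟩
    obtain ⟨i, -, rfl⟩ := hedges f (.inl hf)
    exact ⟨i, hmono.lt_iff_lt.1 (hj ▸ hlast _ hf), rfl⟩

theorem reachUpTo_iff_eq_or_exists_last_edge (hmono : StrictMono fun j => w (e j)) :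
    reachUpTo G w e k u v ↔ u = v ∨ ∃ j : Fin M, j < k ∧
      ∃ x, G.Adj x v ∧ e j = s(x, v) ∧ reachUpTo G w e j u x := by
  refine ⟨reachUpTo.eq_or_exists_last_edge hmono, ?_⟩
  rintro (rfl | ⟨j, hjk, x, h, hj, hr⟩)
  · exact .refl k u
  · exact hr.concat hmono h hj hjk

theorem reachUpTo_succ_iff (hmono : StrictMono fun j => w (e j)) (i : Fin M) :
    reachUpTo G w e (i + 1) u v ↔ reachUpTo G w e i u v ∨
      ∃ x, G.Adj x v ∧ e i = s(x, v) ∧ reachUpTo G w e i u x := by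
  rw [reachUpTo_iff_eq_or_exists_last_edge hmono,
    reachUpTo_iff_eq_or_exists_last_edge (k := i) (v := v) hmono]
  simp only [Nat.lt_succ_iff_lt_or_eq, Fin.val_inj, or_and_right, exists_or, exists_eq_left,
    or_assoc]

theorem apnp_edge_scan_recurrence_general (hmono : StrictMono fun j => w (e j)) (i : Fin M)
    (hadj : G.Adj a b) (hi : e i = s(a, b)) (u v : V) :
    reachUpTo G w e (i + 1) u v ↔ reachUpTo G w e i u v ∨
      (v = b ∧ reachUpTo G w e i u a) ∨ (v = a ∧ reachUpTo G w e i u b) := by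
  rw [reachUpTo_succ_iff hmono, hi]
  refine or_congr_right ⟨?_, ?_⟩
  · rintro ⟨x, -, hx, hr⟩
    rcases Sym2.eq_iff.1 hx with ⟨rfl, rfl⟩ | ⟨rfl, rfl⟩
    · exact .inl ⟨rfl, hr⟩
    · exact .inr ⟨rfl, hr⟩
  · rintro (⟨rfl, hr⟩ | ⟨rfl, hr⟩)
    · exact ⟨a, hadj, rfl, hr⟩
    · exact ⟨b, hadj.symm, Sym2.eq_swap, hr⟩

end EdgeScan

/-- Correctness of the edge-scanning recurrence of the All-Pairs Non-Decreasing
Paths algorithm in the distinct-weights case: if `e 0, …, e (M-1)` lists all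
edges of `G` in increasing order of their pairwise distinct weights, and the
`k`-th edge (`1 ≤ k ≤ M`) has endpoints `a` and `b`, then `u` reaches `v` using
the first `k` edges iff it does so using the first `k - 1` edges, or `v = b`
and `u` reaches `a`, or `v = a` and `u` reaches `b`, using the first `k - 1`
edges. -/
theorem apnp_edge_scan_recurrence {V : Type*} [Fintype V] (G : SimpleGraph V)
    (w : Sym2 V → ℝ) (hw : Set.InjOn w G.edgeSet)
    {M : ℕ} (e : Fin M → Sym2 V)
    (he : ∀ j, e j ∈ G.edgeSet)
    (hsurj : ∀ f ∈ G.edgeSet, ∃ j, e j = f)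
    (hmono : StrictMono (fun j => w (e j)))
    (k : ℕ) (hk1 : 1 ≤ k) (hkM : k ≤ M)
    (a b : V) (hab : e ⟨k - 1, by omega⟩ = s(a, b)) :
    ∀ u v : V,
      reachUpTo G w e k u v ↔
        reachUpTo G w e (k - 1) u v ∨
          (v = b ∧ reachUpTo G w e (k - 1) u a) ∨
          (v = a ∧ reachUpTo G w e (k - 1) u b) := by
  obtain ⟨i, rfl⟩ := Nat.exists_eq_add_of_le' hk1
  exact apnp_edge_scan_recurrence_general hmono ⟨i, hkM⟩ (G.mem_edgeSet.1 (hab ▸ he _)) hab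
end
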